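/- Let ⟨T_i⟩_{i ∈ ℕ} be a sequence of trees in List ℕ. For σ, τ : List ℕ of equal length n, let σ * τ denote the interleaving ⟨σ 0, τ 0, σ 1, τ 1, …, σ (n-1), τ (n-1)⟩. Define T ⊆ List ℕ to consist of: the empty sequence; the sequence [i] for each i ∈ ℕ; and, for each i, each σ ∈ T_i, and each τ ∈ {0,1}^{σ.length}, both the sequence [i] ++ (σ * τ) and the sequence obtained from [i] ++ (σ * τ) by deleting its last entry. Then T is a tree, and for every i, the sequence [i] belongs to the perfect kernel of T (equivalently, [i] belongs to some perfect subtree of T) if and only if T_i has an infinite path. -/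

import Mathlib

/-- A tree is a set of finite sequences of naturals closed under initial segments. -/
def IsTree (T : Set (List ℕ)) : Prop :=
  ∀ σ ∈ T, ∀ τ : List ℕ, τ <+: σ → τ ∈ T

/-- Two sequences are incompatible if neither is a prefix of the other. -/
def Incomp (σ τ : List ℕ) : Prop :=
  ¬ σ <+: τ ∧ ¬ τ <+: σ

/-- `S` is a perfect subtree of `T`: a subtree each of whose elements has
two incompatible extensions in `S`. -/
def IsPerfectSubtree (T S : Set (List ℕ)) : Prop :=
  IsTree S ∧ S ⊆ T ∧
    ∀ σ ∈ S, ∃ τ₁ ∈ S, ∃ τ₂ ∈ S, σ <+: τ₁ ∧ σ <+: τ₂ ∧ Incomp τ₁ τ₂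

/-- An infinite path of `T`: every finite initial segment belongs to `T`. -/
def IsPath (T : Set (List ℕ)) (p : ℕ → ℕ) : Prop :=
  ∀ n : ℕ, (List.ofFn fun i : Fin n => p i) ∈ T

/-- Interleaving of two lists of the same length:
`interleave [a₀,…,aₙ] [b₀,…,bₙ] = [a₀,b₀,…,aₙ,bₙ]`. -/
def interleave : List ℕ → List ℕ → List ℕ
  | [], _ => []
  | _ :: _, [] => []
  | a :: as, b :: bs => a :: b :: interleave as bs

/-!
Below `[i]`, the tree `T` is the tree of all sequences whose even-indexed entries form a sequence of
`T_i` and whose odd-indexed entries are bits. A path of `T_i` leaves every bit free, so interleaving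
its initial segments with arbitrary bits gives a perfect subtree. Conversely, every element of a
perfect tree has a proper extension, so a perfect subtree containing `[i]` has a path through `[i]`,
and the even-indexed entries of that path form a path of `T_i`.
-/

section EvensOdds

variable {α : Type*}

/-- The subsequence `[a₀, a₂, a₄, …]` of `[a₀, a₁, a₂, …]`, which recovers the first argument of an
interleaving. -/
def evens : List α → List α
  | [] => []
  | [a] => [a]
  | a :: _ :: l => a :: evens l

/-- The subsequence `[a₁, a₃, a₅, …]` of `[a₀, a₁, a₂, …]`, which recovers the second argument of an
interleaving. -/
def odds (l : List α) : List α :=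
  evens l.tail

theorem evens_cons (a : α) (l : List α) : evens (a :: l) = a :: odds l := by
  cases l <;> rfl

theorem odds_cons (a : α) (l : List α) : odds (a :: l) = evens l :=
  rfl

mutual

theorem evens_append : ∀ l m : List α,
    evens (l ++ m) = evens l ++ if Even l.length then evens m else odds m
  | [], m => by simp [evens]
  | a :: l, m => by
    simp only [List.cons_append, evens_cons, odds_append l m, List.length_cons,
      Nat.even_add_one, ite_not]

theorem odds_append : ∀ l m : List α,
    odds (l ++ m) = odds l ++ if Even l.length then odds m else evens m
  | [], m => by simp [odds, evens]
  | a :: l, m => by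
    simp only [List.cons_append, odds_cons, evens_append l m, List.length_cons,
      Nat.even_add_one, ite_not]

end

theorem evens_concat_of_even {l : List α} (hl : Even l.length) (a : α) :
    evens (l ++ [a]) = evens l ++ [a] := by
  simp [evens_append, hl, evens]

theorem odds_concat_of_even {l : List α} (hl : Even l.length) (a : α) :
    odds (l ++ [a]) = odds l := by
  simp [odds_append, hl, odds_cons, evens]

theorem evens_concat_of_odd {l : List α} (hl : Odd l.length) (a : α) :
    evens (l ++ [a]) = evens l := by
  simp [evens_append, Nat.not_even_iff_odd.2 hl, odds_cons, evens]

theorem odds_concat_of_odd {l : List α} (hl : Odd l.length) (a : α) :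
    odds (l ++ [a]) = odds l ++ [a] := by
  simp [odds_append, Nat.not_even_iff_odd.2 hl, evens]

theorem evens_prefix_evens {l m : List α} (h : l <+: m) : evens l <+: evens m := by
  obtain ⟨u, rfl⟩ := h
  exact evens_append l u ▸ List.prefix_append _ _

theorem odds_prefix_odds {l m : List α} (h : l <+: m) : odds l <+: odds m := by
  obtain ⟨u, rfl⟩ := h
  exact odds_append l u ▸ List.prefix_append _ _

theorem evens_map_range (p : ℕ → α) (n : ℕ) :
    evens ((List.range (2 * n)).map p) = (List.range n).map fun k => p (2 * k) := by
  induction n with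
  | zero => rfl
  | succ n ih =>
    have h_even : Even ((List.range (2 * n)).map p).length := by simp
    have h_odd : Odd ((List.range (2 * n)).map p ++ [p (2 * n)]).length := by simp
    have h_split : (List.range (2 * (n + 1))).map p =
        (List.range (2 * n)).map p ++ [p (2 * n)] ++ [p (2 * n + 1)] := by
      simp [Nat.mul_succ, List.range_succ]
    rw [h_split, evens_concat_of_odd h_odd, evens_concat_of_even h_even, ih, List.range_succ,
      List.map_append, List.map_singleton]

theorem length_odds_of_even : ∀ {l : List α}, Even l.length → (odds l).length = (evens l).length
  | [], _ => rfl
  | [_], hl => by simp at hl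
  | a :: b :: l, hl => by
    have hl' : Even l.length := by simpa [Nat.even_add_one] using hl
    simp [evens_cons, odds_cons, length_odds_of_even hl']

end EvensOdds

theorem length_interleave : ∀ {σ τ : List ℕ}, τ.length = σ.length →
    (interleave σ τ).length = 2 * σ.length
  | [], _, _ => rfl
  | _ :: _, [], h => by simp at h
  | _ :: σ, _ :: τ, h => by
    simp [interleave, length_interleave (Nat.succ.inj h), Nat.mul_succ]

theorem evens_interleave : ∀ {σ τ : List ℕ}, τ.length = σ.length → evens (interleave σ τ) = σ
  | [], _, _ => rfl
  | _ :: _, [], h => by simp at h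
  | _ :: σ, _ :: τ, h => by simp [interleave, evens, evens_interleave (Nat.succ.inj h)]

theorem odds_interleave : ∀ {σ τ : List ℕ}, τ.length = σ.length → odds (interleave σ τ) = τ
  | [], _, h => (List.length_eq_zero_iff.1 h).symm
  | _ :: _, [], h => by simp at h
  | _ :: σ, _ :: τ, h => by
    simp [interleave, odds_cons, evens_cons, odds_interleave (Nat.succ.inj h)]

theorem interleave_evens_odds : ∀ {l : List ℕ}, Even l.length → interleave (evens l) (odds l) = l
  | [], _ => rfl
  | [_], hl => by simp at hl
  | a :: b :: l, hl => by
    have hl' : Even l.length := by simpa [Nat.even_add_one] using hl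
    simp [evens_cons, odds_cons, interleave, interleave_evens_odds hl']

/-- A set of sequences is pruned if it has no leaves. In contrast with common usage, it need not be
a tree. -/
def IsPruned (S : Set (List ℕ)) : Prop :=
  ∀ σ ∈ S, ∃ a, σ ++ [a] ∈ S

theorem isPath_iff_map_range_mem {T : Set (List ℕ)} {p : ℕ → ℕ} :
    IsPath T p ↔ ∀ n, (List.range n).map p ∈ T := by
  have h (n : ℕ) : (List.ofFn fun i : Fin n => p i) = (List.range n).map p := by
    rw [← List.map_coe_finRange_eq_range, List.map_map, List.ofFn_eq_map]
    rfl
  simp only [IsPath, h]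

theorem IsPruned.exists_isPath {S : Set (List ℕ)} (hS : IsPruned S) (h_nil : [] ∈ S) :
    ∃ p, IsPath S p := by
  choose! next h_next using hS
  let x : ℕ → List ℕ := Nat.rec [] fun _ l => l ++ [next l]
  have hx (n : ℕ) : x n = (List.range n).map fun k => next (x k) := by
    induction n with
    | zero => rfl
    | succ n ih => rw [List.range_succ, List.map_append, ← ih, List.map_singleton]
  have hx_mem (n : ℕ) : x n ∈ S := by
    induction n with
    | zero => exact h_nil
    | succ n ih => exact h_next _ ih
  exact ⟨fun k => next (x k), isPath_iff_map_range_mem.2 fun n => hx n ▸ hx_mem n⟩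

theorem IsTree.insert_nil {T : Set (List ℕ)} (hT : IsTree T) : IsTree (insert [] T) := by
  rintro σ (rfl | hσ) τ hτ
  · exact Or.inl (List.prefix_nil.1 hτ)
  · exact Or.inr (hT σ hσ τ hτ)

theorem IsTree.preimage_cons {T : Set (List ℕ)} (hT : IsTree T) (i : ℕ) :
    IsTree (List.cons i ⁻¹' T) :=
  fun σ hσ τ hτ => hT (i :: σ) hσ (i :: τ) ((List.prefix_cons_inj i).2 hτ)

theorem isTree_of_preimage_cons {T : Set (List ℕ)} (h_nil : [] ∈ T)
    (hT : ∀ i, IsTree (List.cons i ⁻¹' T)) : IsTree T := by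
  rintro σ hσ (_ | ⟨i, τ⟩) ⟨u, rfl⟩
  · exact h_nil
  · exact hT i (τ ++ u) hσ τ (List.prefix_append τ u)

theorem incomp_cons_iff {i : ℕ} {σ τ : List ℕ} : Incomp (i :: σ) (i :: τ) ↔ Incomp σ τ := by
  simp only [Incomp, List.prefix_cons_inj]

theorem incomp_concat {σ : List ℕ} {a b : ℕ} (hab : a ≠ b) : Incomp (σ ++ [a]) (σ ++ [b]) := by
  simp [Incomp, List.prefix_append_right_inj, hab, hab.symm]

namespace IsPerfectSubtree

variable {T S : Set (List ℕ)}

theorem mono {T' : Set (List ℕ)} (hS : IsPerfectSubtree T S) (hTT' : T ⊆ T') :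
    IsPerfectSubtree T' S :=
  ⟨hS.1, hS.2.1.trans hTT', hS.2.2⟩

theorem isPruned (hS : IsPerfectSubtree T S) : IsPruned S := by
  intro σ hσ
  obtain ⟨τ, hτ, ρ, -, ⟨u, rfl⟩, hσρ, h_incomp, -⟩ := hS.2.2 σ hσ
  obtain _ | ⟨a, u⟩ := u
  · exact absurd (by simpa using hσρ) h_incomp
  · exact ⟨a, hS.1 _ hτ _ ⟨u, by simp⟩⟩

theorem of_insert_nil (hT : IsTree T) (hS : IsPerfectSubtree (insert [] T) S) :
    IsPerfectSubtree T S := by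
  refine ⟨hS.1, fun σ hσ => ?_, hS.2.2⟩
  obtain ⟨a, ha⟩ := hS.isPruned σ hσ
  have ha' : σ ++ [a] ∈ T := (hS.2.1 ha).resolve_left (by simp)
  exact hT _ ha' σ (List.prefix_append σ [a])

theorem preimage_cons (hS : IsPerfectSubtree T S) (i : ℕ) :
    IsPerfectSubtree (List.cons i ⁻¹' T) (List.cons i ⁻¹' S) := by
  refine ⟨hS.1.preimage_cons i, Set.preimage_mono hS.2.1, fun σ hσ => ?_⟩
  obtain ⟨_, h₁, _, h₂, ⟨u₁, rfl⟩, ⟨u₂, rfl⟩, h_incomp⟩ := hS.2.2 (i :: σ) hσ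
  exact ⟨σ ++ u₁, h₁, σ ++ u₂, h₂, List.prefix_append .., List.prefix_append ..,
    incomp_cons_iff.1 h_incomp⟩

theorem insert_nil_image_cons {i : ℕ} (hS : IsPerfectSubtree (List.cons i ⁻¹' T) S)
    (hT : [] ∈ T) (h_nil : [] ∈ S) : IsPerfectSubtree T (insert [] (List.cons i '' S)) := by
  have h_branch (σ : List ℕ) (hσ : σ ∈ S) : ∃ τ₁ ∈ insert [] (List.cons i '' S),
      ∃ τ₂ ∈ insert [] (List.cons i '' S), i :: σ <+: τ₁ ∧ i :: σ <+: τ₂ ∧ Incomp τ₁ τ₂ := by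
    obtain ⟨τ₁, h₁, τ₂, h₂, hσ₁, hσ₂, h_incomp⟩ := hS.2.2 σ hσ
    exact ⟨i :: τ₁, Or.inr ⟨τ₁, h₁, rfl⟩, i :: τ₂, Or.inr ⟨τ₂, h₂, rfl⟩,
      (List.prefix_cons_inj i).2 hσ₁, (List.prefix_cons_inj i).2 hσ₂, incomp_cons_iff.2 h_incomp⟩
  refine ⟨isTree_of_preimage_cons (Or.inl rfl) ?_,
    Set.insert_subset hT (Set.image_subset_iff.2 hS.2.1), ?_⟩
  · rintro j σ (h | ⟨ρ, hρ, h⟩) τ hτ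
    · cases h
    · cases h
      exact Or.inr ⟨τ, hS.1 σ hρ τ hτ, rfl⟩
  · rintro _ (rfl | ⟨σ, hσ, rfl⟩)
    · obtain ⟨τ₁, h₁, τ₂, h₂, -, -, h_incomp⟩ := h_branch [] h_nil
      exact ⟨τ₁, h₁, τ₂, h₂, List.nil_prefix, List.nil_prefix, h_incomp⟩
    · exact h_branch σ hσ

end IsPerfectSubtree

theorem exists_isPerfectSubtree_singleton_mem_iff {T : Set (List ℕ)} (hT : [] ∈ T) (i : ℕ) :
    (∃ S, IsPerfectSubtree T S ∧ [i] ∈ S) ↔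
      ∃ S, IsPerfectSubtree (List.cons i ⁻¹' T) S ∧ [] ∈ S := by
  constructor
  · rintro ⟨S, hS, hi⟩
    exact ⟨_, hS.preimage_cons i, hi⟩
  · rintro ⟨S, hS, h_nil⟩
    exact ⟨_, hS.insert_nil_image_cons hT h_nil, Or.inr ⟨[], h_nil, rfl⟩⟩

theorem exists_isPerfectSubtree_insert_nil_iff {T : Set (List ℕ)} (hT : IsTree T) :
    (∃ S, IsPerfectSubtree (insert [] T) S ∧ [] ∈ S) ↔ ∃ S, IsPerfectSubtree T S ∧ [] ∈ S :=
  exists_congr fun _ => and_congr_left fun _ =>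
    ⟨.of_insert_nil hT, fun hS => hS.mono (Set.subset_insert _ _)⟩

/-- The tree of initial segments of the infinite sequence `p`. -/
def initialSegments (p : ℕ → ℕ) : Set (List ℕ) :=
  Set.range fun n => (List.range n).map p

theorem nil_mem_initialSegments (p : ℕ → ℕ) : [] ∈ initialSegments p :=
  ⟨0, rfl⟩

theorem isTree_initialSegments (p : ℕ → ℕ) : IsTree (initialSegments p) := by
  rintro _ ⟨n, rfl⟩ τ hτ
  refine ⟨min τ.length n, ?_⟩
  rw [List.prefix_iff_eq_take.1 hτ]
  simp [← List.map_take, List.take_range]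

theorem isPruned_initialSegments (p : ℕ → ℕ) : IsPruned (initialSegments p) := by
  rintro _ ⟨n, rfl⟩
  exact ⟨p n, n + 1, by simp [List.range_succ]⟩

theorem IsPath.initialSegments_subset {T : Set (List ℕ)} {p : ℕ → ℕ} (hp : IsPath T p) :
    initialSegments p ⊆ T :=
  Set.range_subset_iff.2 (isPath_iff_map_range_mem.1 hp)

/-- The interleavings of sequences of `A` with sequences of bits, where the last bit may be missing.
Reading off the entries of even and odd index covers both parities of the length at once. -/
def bitInterleaving (A : Set (List ℕ)) : Set (List ℕ) :=
  {l | evens l ∈ A ∧ ∀ x ∈ odds l, x ≤ 1}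

section BitInterleaving

variable {A : Set (List ℕ)}

theorem mem_bitInterleaving {l : List ℕ} :
    l ∈ bitInterleaving A ↔ evens l ∈ A ∧ ∀ x ∈ odds l, x ≤ 1 :=
  Iff.rfl

theorem bitInterleaving_mono {B : Set (List ℕ)} (hAB : A ⊆ B) :
    bitInterleaving A ⊆ bitInterleaving B :=
  fun _ hl => ⟨hAB hl.1, hl.2⟩

theorem interleave_mem_bitInterleaving {σ τ : List ℕ} (hσ : σ ∈ A) (h_len : τ.length = σ.length)
    (hτ : ∀ x ∈ τ, x ≤ 1) : interleave σ τ ∈ bitInterleaving A := by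
  rw [mem_bitInterleaving, evens_interleave h_len, odds_interleave h_len]
  exact ⟨hσ, hτ⟩

theorem concat_mem_bitInterleaving_iff_of_even {l : List ℕ} (hl : Even l.length) {a : ℕ} :
    l ++ [a] ∈ bitInterleaving A ↔ evens l ++ [a] ∈ A ∧ ∀ x ∈ odds l, x ≤ 1 := by
  rw [mem_bitInterleaving, evens_concat_of_even hl, odds_concat_of_even hl]

theorem concat_mem_bitInterleaving_iff_of_odd {l : List ℕ} (hl : Odd l.length) {b : ℕ} :
    l ++ [b] ∈ bitInterleaving A ↔ l ∈ bitInterleaving A ∧ b ≤ 1 := by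
  simp only [mem_bitInterleaving, evens_concat_of_odd hl, odds_concat_of_odd hl,
    List.forall_mem_append, List.forall_mem_singleton, and_assoc]

theorem mem_bitInterleaving_iff_exists_interleave {l : List ℕ} :
    l ∈ bitInterleaving A ↔ ∃ σ τ, σ ∈ A ∧ τ.length = σ.length ∧ (∀ x ∈ τ, x ≤ 1) ∧
      (l = interleave σ τ ∨ ∃ b, l ++ [b] = interleave σ τ) := by
  constructor
  · intro hl
    obtain h_even | h_odd := Nat.even_or_odd l.length
    · exact ⟨evens l, odds l, hl.1, length_odds_of_even h_even, hl.2,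
        Or.inl (interleave_evens_odds h_even).symm⟩
    · have hl₀ : l ++ [0] ∈ bitInterleaving A :=
        (concat_mem_bitInterleaving_iff_of_odd h_odd).2 ⟨hl, zero_le_one⟩
      have h_even : Even (l ++ [0]).length := by simpa using h_odd.add_one
      exact ⟨evens (l ++ [0]), odds (l ++ [0]), hl₀.1, length_odds_of_even h_even, hl₀.2,
        Or.inr ⟨0, (interleave_evens_odds h_even).symm⟩⟩
  · rintro ⟨σ, τ, hσ, h_len, hτ, rfl | ⟨b, hb⟩⟩
    · exact interleave_mem_bitInterleaving hσ h_len hτ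
    · have h_mem : l ++ [b] ∈ bitInterleaving A :=
        hb ▸ interleave_mem_bitInterleaving hσ h_len hτ
      have h_odd : Odd l.length := by
        have h_length : l.length + 1 = 2 * σ.length := by
          rw [← length_interleave h_len, ← hb, List.length_append, List.length_singleton]
        exact Nat.not_even_iff_odd.1 (Nat.even_add_one.1 (h_length ▸ even_two_mul _))
      exact ((concat_mem_bitInterleaving_iff_of_odd h_odd).1 h_mem).1

theorem IsTree.bitInterleaving (hA : IsTree A) : IsTree (bitInterleaving A) :=
  fun _ hσ _ hτ => ⟨hA _ hσ.1 _ (evens_prefix_evens hτ),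
    fun x hx => hσ.2 x ((odds_prefix_odds hτ).subset hx)⟩

theorem IsPruned.isPerfectSubtree_bitInterleaving (h_pruned : IsPruned A) (h_tree : IsTree A) :
    IsPerfectSubtree (bitInterleaving A) (bitInterleaving A) := by
  refine ⟨h_tree.bitInterleaving, Set.Subset.rfl, fun l hl => ?_⟩
  obtain ⟨m, hlm, hm, h_odd⟩ : ∃ m, l <+: m ∧ m ∈ bitInterleaving A ∧ Odd m.length := by
    obtain h_even | h_odd := Nat.even_or_odd l.length
    · obtain ⟨a, ha⟩ := h_pruned (evens l) hl.1
      exact ⟨l ++ [a], List.prefix_append l [a],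
        (concat_mem_bitInterleaving_iff_of_even h_even).2 ⟨ha, hl.2⟩, by simpa using h_even.add_one⟩
    · exact ⟨l, List.prefix_rfl, hl, h_odd⟩
  have h_concat {b : ℕ} (hb : b ≤ 1) : m ++ [b] ∈ bitInterleaving A :=
    (concat_mem_bitInterleaving_iff_of_odd h_odd).2 ⟨hm, hb⟩
  exact ⟨m ++ [0], h_concat zero_le_one, m ++ [1], h_concat le_rfl,
    hlm.trans (List.prefix_append m _), hlm.trans (List.prefix_append m _),
    incomp_concat zero_ne_one⟩

theorem IsPath.comp_two_mul {p : ℕ → ℕ} (hp : IsPath (bitInterleaving A) p) :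
    IsPath A fun k => p (2 * k) := by
  rw [isPath_iff_map_range_mem] at hp ⊢
  exact fun n => evens_map_range p n ▸ (hp (2 * n)).1

theorem exists_isPerfectSubtree_bitInterleaving_iff :
    (∃ S, IsPerfectSubtree (bitInterleaving A) S ∧ [] ∈ S) ↔ ∃ p, IsPath A p := by
  constructor
  · rintro ⟨S, hS, h_nil⟩
    obtain ⟨p, hp⟩ := hS.isPruned.exists_isPath h_nil
    have hp' : IsPath (bitInterleaving A) p := fun n => hS.2.1 (hp n)
    exact ⟨_, hp'.comp_two_mul⟩
  · rintro ⟨p, hp⟩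
    have h_perfect := (isPruned_initialSegments p).isPerfectSubtree_bitInterleaving
      (isTree_initialSegments p)
    exact ⟨_, h_perfect.mono (bitInterleaving_mono hp.initialSegments_subset),
      interleave_mem_bitInterleaving (nil_mem_initialSegments p) rfl (List.forall_mem_nil _)⟩

end BitInterleaving

/-- The tree `T` that codes the sequence `Ti` of trees, so that `Ti i` is coded below `[i]`. -/
def codingTree (Ti : ℕ → Set (List ℕ)) : Set (List ℕ) :=
  {([] : List ℕ)}
    ∪ {l : List ℕ | ∃ i : ℕ, l = [i]}
    ∪ {l : List ℕ | ∃ i : ℕ, ∃ σ τ : List ℕ, σ ∈ Ti i ∧ τ.length = σ.length ∧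
        (∀ x ∈ τ, x ≤ 1) ∧
        (l = i :: interleave σ τ ∨ l = (i :: interleave σ τ).dropLast)}

theorem nil_mem_codingTree (Ti : ℕ → Set (List ℕ)) : [] ∈ codingTree Ti :=
  Or.inl (Or.inl rfl)

theorem cons_eq_dropLast_cons_iff {α : Type*} {i j : α} {l m : List α} :
    i :: l = (j :: m).dropLast ↔ i = j ∧ ∃ b, l ++ [b] = m := by
  obtain rfl | ⟨m, b, rfl⟩ := m.eq_nil_or_concat
  · simp
  · rw [List.concat_eq_append, ← List.cons_append, List.dropLast_concat]
    simp

theorem preimage_cons_codingTree (Ti : ℕ → Set (List ℕ)) (i : ℕ) :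
    List.cons i ⁻¹' codingTree Ti = insert [] (bitInterleaving (Ti i)) := by
  ext l
  simp only [Set.mem_insert_iff, mem_bitInterleaving_iff_exists_interleave, codingTree,
    Set.mem_preimage, Set.mem_union, Set.mem_singleton_iff, Set.mem_ofPred_eq,
    cons_eq_dropLast_cons_iff, List.cons.injEq]
  grind

theorem isTree_codingTree {Ti : ℕ → Set (List ℕ)} (hTi : ∀ i, IsTree (Ti i)) :
    IsTree (codingTree Ti) := by
  refine isTree_of_preimage_cons (nil_mem_codingTree Ti) fun i => ?_
  rw [preimage_cons_codingTree]
  exact (hTi i).bitInterleaving.insert_nil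

theorem kernel_detects_paths (Ti : ℕ → Set (List ℕ)) (hTi : ∀ i : ℕ, IsTree (Ti i))
    (T : Set (List ℕ))
    (hT : T = {([] : List ℕ)}
        ∪ {l : List ℕ | ∃ i : ℕ, l = [i]}
        ∪ {l : List ℕ | ∃ i : ℕ, ∃ σ τ : List ℕ, σ ∈ Ti i ∧ τ.length = σ.length ∧
            (∀ x ∈ τ, x ≤ 1) ∧
            (l = i :: interleave σ τ ∨ l = (i :: interleave σ τ).dropLast)}) :
    IsTree T ∧
      ∀ i : ℕ, (∃ S : Set (List ℕ), IsPerfectSubtree T S ∧ [i] ∈ S) ↔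
        ∃ p : ℕ → ℕ, IsPath (Ti i) p := by
  obtain rfl : T = codingTree Ti := hT
  refine ⟨isTree_codingTree hTi, fun i => ?_⟩
  rw [exists_isPerfectSubtree_singleton_mem_iff (nil_mem_codingTree Ti),
    preimage_cons_codingTree,
    exists_isPerfectSubtree_insert_nil_iff (hTi i).bitInterleaving,
    exists_isPerfectSubtree_bitInterleaving_iff]
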